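/- arXiv:1812.10269 — 2 statements merged into one kernel-verified Lean document; each statement's English description precedes it below -/
import Mathlib

section
/- (Guth–Katz polynomial partitioning for points.) For every positive integer d there is a constant C_d such that the following holds: given a set of n points in ℝ^d and an integer D ≥ 1, there exists a nonzero d-variate real polynomial P of degree at most D such that each connected component of ℝ^d \ Z(P) contains at most C_d·n/D^d points of the set. -/
open MvPolynomial

theorem gk_odd_module {A : Type} [CommRing A] [Algebra ℝ A] : ∀ (k : ℕ) (M : Type) [AddCommGroup M]
    [Module ℝ M] [Module A M] [IsScalarTower ℝ A M] [Module.Finite ℝ M],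
    Module.finrank ℝ M = k → Odd k → Nonempty (A →ₐ[ℝ] ℝ) := by
  intro k
  induction k using Nat.strong_induction_on with
  | _ k ih =>
  intro M _ _ _ _ _ hk hodd
  by_cases hs : IsSimpleModule A M
  · obtain ⟨m, hm, ⟨e⟩⟩ := isSimpleModule_iff_quot_maximal.mp hs
    have e' : M ≃ₗ[ℝ] (A ⧸ m) := e.restrictScalars ℝ
    let : Field (A ⧸ m) := Ideal.Quotient.field m
    have : Module.Finite ℝ (A ⧸ m) := Module.Finite.equiv e'
    have hfr : Module.finrank ℝ (A ⧸ m) = k := by rw [← hk]; exact e'.symm.finrank_eq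
    rcases Real.nonempty_algEquiv_or (A ⧸ m) with ⟨⟨f⟩⟩ | ⟨⟨f⟩⟩
    · exact ⟨f.toAlgHom.comp (Ideal.Quotient.mkₐ ℝ m)⟩
    · exfalso
      have := f.toLinearEquiv.finrank_eq
      rw [Complex.finrank_real_complex, hfr] at this
      subst this
      revert hodd; decide
  · have hnt : Nontrivial M := by
      by_contra h
      rw [not_nontrivial_iff_subsingleton] at h
      rw [Module.finrank_zero_of_subsingleton] at hk
      subst hk; revert hodd; decide
    obtain ⟨N, hN0, hN1⟩ : ∃ N : Submodule A M, N ≠ ⊥ ∧ N ≠ ⊤ := by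
      by_contra h
      push Not at h
      apply hs
      rw [isSimpleModule_iff]
      exact { eq_bot_or_eq_top := fun N => by
                by_cases h' : N = ⊥
                · exact Or.inl h'
                · exact Or.inr (h N h') }
    let N' := N.restrictScalars ℝ
    have h1 : Module.finrank ℝ (M ⧸ N') + Module.finrank ℝ N' = k := by
      rw [← hk]; exact Submodule.finrank_quotient_add_finrank N'
    let eq : (M ⧸ N') ≃ₗ[ℝ] (M ⧸ N) := Submodule.Quotient.restrictScalarsEquiv ℝ N
    have : Module.Finite ℝ (M ⧸ N) := Module.Finite.equiv eq
    have : Module.Finite ℝ N := inferInstanceAs (Module.Finite ℝ N')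
    have h2 : Module.finrank ℝ (M ⧸ N') = Module.finrank ℝ (M ⧸ N) := eq.finrank_eq
    have h3 : Module.finrank ℝ N' = Module.finrank ℝ N := rfl
    have hlt : Module.finrank ℝ N' < k := by
      rw [← hk]; apply Submodule.finrank_lt
      intro h; apply hN1; exact (Submodule.restrictScalars_eq_top_iff ℝ A M).mp h
    have hpos : 0 < Module.finrank ℝ N' := by
      rw [Nat.pos_iff_ne_zero, Ne, Submodule.finrank_eq_zero]
      intro h; apply hN0; exact (Submodule.restrictScalars_eq_bot_iff ℝ A M).mp h
    rcases Nat.even_or_odd (Module.finrank ℝ N) with he | ho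
    · have : Odd (Module.finrank ℝ (M ⧸ N)) := by
        rw [← h1, h2, h3] at hodd
        exact (Nat.odd_add.mp hodd).mpr he
      exact ih _ (by omega) (M ⧸ N) rfl this
    · exact ih _ (by omega) N rfl ho

noncomputable def gkU {n : ℕ} {R : Type} [CommRing R] (D : ℕ) (G : Fin n → MvPolynomial (Fin n) R)
    (m : Fin n →₀ ℕ) : MvPolynomial (Fin n) R :=
  ∏ i, X i ^ (m i % D) * G i ^ (m i / D)

theorem gkU_deg {n : ℕ} {R : Type} [CommRing R] [Nontrivial R] (D : ℕ)
    (G : Fin n → MvPolynomial (Fin n) R)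
    (hG : ∀ i, (G i).totalDegree ≤ D) (m : Fin n →₀ ℕ) : (gkU D G m).totalDegree ≤ m.degree := by
  refine (totalDegree_finsetProd _ _).trans ?_
  rw [Finsupp.degree_eq_sum]
  refine Finset.sum_le_sum fun i _ => ?_
  refine (totalDegree_mul _ _).trans ?_
  refine (add_le_add (totalDegree_pow _ _) (totalDegree_pow _ _)).trans ?_
  rw [totalDegree_X]
  calc _ ≤ m i % D * 1 + m i / D * D := by gcongr; exact hG i
    _ = m i := by rw [mul_one, mul_comm, Nat.mod_add_div]

theorem gkU_zero {n : ℕ} {R : Type} [CommRing R] (D : ℕ) (m : Fin n →₀ ℕ) :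
    gkU D (fun i => (X i ^ D : MvPolynomial (Fin n) R)) m = monomial m 1 := by
  rw [monomial_eq, Finsupp.prod_fintype _ _ (by simp)]
  simp only [gkU, C_1, one_mul]
  refine Finset.prod_congr rfl fun i _ => ?_
  rw [← pow_mul, ← pow_add, Nat.mod_add_div]

theorem gkU_map {n : ℕ} {R S : Type} [CommRing R] [CommRing S] (D : ℕ) (φ : R →+* S)
    (G : Fin n → MvPolynomial (Fin n) R) (m : Fin n →₀ ℕ) :
    map φ (gkU D G m) = gkU D (fun i => map φ (G i)) m := by
  simp [gkU, map_prod]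

theorem gkU_mul {n : ℕ} {R : Type} [CommRing R] (D : ℕ) (hD : 0 < D)
    (G : Fin n → MvPolynomial (Fin n) R) (m : Fin n →₀ ℕ) (i : Fin n) :
    gkU D G m * G i = gkU D G (m + Finsupp.single i D) := by
  classical
  simp only [gkU]
  rw [← Finset.mul_prod_erase _ _ (Finset.mem_univ i),
    ← Finset.mul_prod_erase (a := i) Finset.univ _ (Finset.mem_univ i)]
  have : ∀ j ∈ Finset.univ.erase i, X (R := R) j ^ ((m + Finsupp.single i D) j % D) *
      G j ^ ((m + Finsupp.single i D) j / D) = X j ^ (m j % D) * G j ^ (m j / D) := by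
    intro j hj
    have : j ≠ i := Finset.ne_of_mem_erase hj
    simp [this.symm]
  rw [Finset.prod_congr rfl this]
  simp [Nat.add_div_right _ hD, pow_succ]
  ring

theorem gk_basis {n : ℕ} (u : (Fin n →₀ ℕ) → MvPolynomial (Fin n) ℝ)
    (hu : ∀ m, (u m).totalDegree ≤ m.degree) (F : ℕ → Finset (Fin n →₀ ℕ))
    (hF : ∀ k m, m ∈ F k ↔ m.degree ≤ k)
    (hdet : ∀ k, (Matrix.of fun (a b : F k) => coeff (a : Fin n →₀ ℕ) (u b)).det ≠ 0) :
    LinearIndependent ℝ u ∧ ⊤ ≤ Submodule.span ℝ (Set.range u) := by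
  classical
  constructor
  · rw [linearIndependent_iff]
    intro l hl
    set k := l.support.sup Finsupp.degree with hk
    have hsub : l.support ⊆ F k := fun m hm => (hF k m).2 (Finset.le_sup (f := Finsupp.degree) hm)
    have h0 := Matrix.eq_zero_of_mulVec_eq_zero (hdet k) (v := fun b : F k => l b) (by
      ext a
      simp only [Matrix.mulVec, dotProduct, Matrix.of_apply, Pi.zero_apply]
      rw [Finset.sum_coe_sort (F k) (fun b => coeff (a : Fin n →₀ ℕ) (u b) * l b)]
      have := congrArg (coeff (a : Fin n →₀ ℕ)) hl
      rw [Finsupp.linearCombination_apply, Finsupp.sum_of_support_subset _ hsub _ (by simp),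
        coeff_sum] at this
      simpa [mul_comm] using this)
    ext m
    by_cases hm : m ∈ l.support
    · exact congrFun h0 ⟨m, hsub hm⟩
    · simpa using hm
  · intro p _
    set k := p.totalDegree
    set A := (Matrix.of fun (a b : F k) => coeff (a : Fin n →₀ ℕ) (u b)) with hA
    have hunit : IsUnit A.det := (hdet k).isUnit
    set c := A⁻¹.mulVec (fun a : F k => coeff (a : Fin n →₀ ℕ) p) with hc
    have hc' : A.mulVec c = fun a : F k => coeff (a : Fin n →₀ ℕ) p := by
      rw [hc, Matrix.mulVec_mulVec, Matrix.mul_nonsing_inv _ hunit, Matrix.one_mulVec]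
    have hp : p = ∑ b : F k, c b • u b := by
      ext a
      by_cases ha : a ∈ F k
      · have := congrFun hc' ⟨a, ha⟩
        simp only [Matrix.mulVec, dotProduct, hA, Matrix.of_apply] at this
        rw [← this, coeff_sum]
        simp [mul_comm]
      · have hka : k < a.degree := by rw [hF] at ha; omega
        rw [coeff_eq_zero_of_totalDegree_lt, coeff_sum, Finset.sum_eq_zero]
        · intro b _
          rw [coeff_smul, coeff_eq_zero_of_totalDegree_lt, smul_zero]
          have h1 := hu b
          have h2 := (hF k b).1 b.2
          change _ < a.degree
          omega
        · exact hka
    rw [hp]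
    exact Submodule.sum_mem _ fun b _ => Submodule.smul_mem _ _ (Submodule.subset_span ⟨_, rfl⟩)

theorem gk_good {n : ℕ} (D : ℕ) (H : Fin n → MvPolynomial (Fin n) ℝ)
    (hH : ∀ i, (H i).totalDegree ≤ D) :
    ∃ E : Set ℝ, E.Countable ∧ ∀ ε ∉ E,
      LinearIndependent ℝ (gkU D (fun i => X i ^ D - C ε * H i)) ∧
      ⊤ ≤ Submodule.span ℝ (Set.range (gkU D (fun i => X i ^ D - C ε * H i))) := by
  classical
  have hfin : ∀ k, {m : Fin n →₀ ℕ | m.degree ≤ k}.Finite := fun k =>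
    Finsupp.finite_of_degree_le k
  let F : ℕ → Finset (Fin n →₀ ℕ) := fun k => (hfin k).toFinset
  have hF : ∀ k m, m ∈ F k ↔ m.degree ≤ k := fun k m => by simp [F]
  let G : Fin n → MvPolynomial (Fin n) (Polynomial ℝ) :=
    fun i => X i ^ D - C Polynomial.X * map Polynomial.C (H i)
  let A : (k : ℕ) → Matrix (F k) (F k) (Polynomial ℝ) :=
    fun k => Matrix.of fun a b => coeff (a : Fin n →₀ ℕ) (gkU D G b)
  have hmap : ∀ ε i, map (Polynomial.evalRingHom ε) (G i) = X i ^ D - C ε * H i := by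
    intro ε i
    have : (Polynomial.evalRingHom ε).comp Polynomial.C = RingHom.id ℝ := by ext; simp
    simp only [G, map_sub, map_pow, map_mul, map_X, map_C, map_map, this, map_id]
    simp
  have hev : ∀ k ε, (A k).det.eval ε =
      (Matrix.of fun (a b : F k) =>
        coeff (a : Fin n →₀ ℕ) (gkU D (fun i => X i ^ D - C ε * H i) b)).det := by
    intro k ε
    rw [← Polynomial.coe_evalRingHom, RingHom.map_det]
    congr 1
    ext a b
    simp only [A, RingHom.mapMatrix_apply, Matrix.map_apply, Matrix.of_apply]
    rw [← coeff_map, gkU_map]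
    simp only [hmap]
  have hne : ∀ k, (A k).det ≠ 0 := by
    intro k h
    have h1 := hev k 0
    rw [h] at h1
    simp only [Polynomial.eval_zero, C_0, zero_mul, sub_zero, gkU_zero] at h1
    have : (Matrix.of fun (a b : F k) =>
        coeff (a : Fin n →₀ ℕ) (monomial (b : Fin n →₀ ℕ) (1 : ℝ))) = 1 := by
      ext a b
      simp only [Matrix.of_apply, coeff_monomial, Matrix.one_apply, Subtype.ext_iff]
      congr 1
      rw [eq_iff_iff]; exact eq_comm
    rw [this, Matrix.det_one] at h1
    exact zero_ne_one h1
  refine ⟨⋃ k, {ε | (A k).det.IsRoot ε}, Set.countable_iUnion fun k =>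
    (Polynomial.finite_setOfPred_isRoot (hne k)).countable, fun ε hε => ?_⟩
  simp only [Set.mem_iUnion, not_exists, Set.mem_ofPred_eq] at hε
  refine gk_basis _ (gkU_deg D _ ?_) F hF fun k => ?_
  · intro i
    refine (totalDegree_sub _ _).trans (max_le ?_ ?_)
    · rw [totalDegree_X_pow]
    · refine (totalDegree_mul _ _).trans ?_
      simpa using hH i
  · rw [← hev]; exact hε k

theorem gk_finrank {n : ℕ} (D : ℕ) (hD : 0 < D) (G : Fin n → MvPolynomial (Fin n) ℝ)
    (hli : LinearIndependent ℝ (gkU D G)) (hsp : ⊤ ≤ Submodule.span ℝ (Set.range (gkU D G))) :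
    ∃ T : MvPolynomial (Fin n) ℝ →ₗ[ℝ] ((Fin n → Fin D) → ℝ), Function.Surjective T ∧
      ∀ p, T p = 0 ↔ p ∈ Ideal.span (Set.range G) := by
  classical
  let b := Module.Basis.mk hli hsp
  have hb : ∀ m, b m = gkU D G m := fun m => by simp [b]
  let T : MvPolynomial (Fin n) ℝ →ₗ[ℝ] ((Fin n → Fin D) → ℝ) :=
    b.constr ℝ fun m a => if (∀ i, m i = a i) then (1 : ℝ) else 0
  have hT : ∀ m a, T (gkU D G m) a = if (∀ i, m i = (a i : ℕ)) then (1 : ℝ) else 0 := by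
    intro m a
    rw [← hb, Module.Basis.constr_basis]
  refine ⟨T, ?_, fun p => ⟨?_, ?_⟩⟩
  · rw [← LinearMap.range_eq_top, eq_top_iff, ← (Pi.basisFun ℝ (Fin n → Fin D)).span_eq,
      Submodule.span_le]
    rintro _ ⟨a, rfl⟩
    refine ⟨gkU D G (Finsupp.equivFunOnFinite.symm fun i => (a i : ℕ)), ?_⟩
    ext a'
    rw [hT]
    simp only [Pi.basisFun_apply, Pi.single_apply, Finsupp.equivFunOnFinite_symm_apply_apply]
    congr 1
    rw [eq_iff_iff]
    constructor
    · intro h; ext i; exact (h i).symm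
    · rintro rfl i; rfl
  · intro hp
    have hrep : ∀ m : Fin n →₀ ℕ, (∀ i, m i < D) → b.repr p m = 0 := by
      intro m hm
      have := congrFun hp (fun i => ⟨m i, hm i⟩)
      rw [← b.linearCombination_repr p, Finsupp.linearCombination_apply, Finsupp.sum, map_sum,
        Finset.sum_apply] at this
      simp only [map_smul, hb, Pi.smul_apply, hT, Pi.zero_apply, smul_eq_mul] at this
      rw [Finset.sum_eq_single m] at this
      · simpa using this
      · intro m' _ hne
        rw [if_neg, mul_zero]
        intro h; exact hne (Finsupp.ext h)
      · intro h; simpa using h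
    rw [← b.linearCombination_repr p, Finsupp.linearCombination_apply]
    refine Submodule.sum_mem _ fun m _ => ?_
    by_cases hm : ∀ i, m i < D
    · rw [hrep m hm]; simp
    · push Not at hm
      obtain ⟨i, hi⟩ := hm
      change (b.repr p) m • b m ∈ _
      rw [hb, smul_eq_C_mul]
      apply Ideal.mul_mem_left
      have : m = (m - Finsupp.single i D) + Finsupp.single i D := by
        ext j
        by_cases hj : j = i
        · subst hj; simp; omega
        · simp [Ne.symm hj]
      rw [this, ← gkU_mul D hD]
      exact Ideal.mul_mem_left _ _ (Ideal.subset_span ⟨i, rfl⟩)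
  · intro hp
    have hmul : ∀ i q, T (q * G i) = 0 := by
      intro i q
      have : T ∘ₗ (LinearMap.mulRight ℝ (G i)) = 0 := by
        apply b.ext
        intro m
        simp only [LinearMap.comp_apply, LinearMap.mulRight_apply, LinearMap.zero_apply, hb]
        rw [gkU_mul D hD]
        ext a
        rw [hT, if_neg]; · rfl
        intro h
        have h1 := h i
        simp at h1
        have := (a i).2
        omega
      exact LinearMap.congr_fun this q
    rw [Ideal.mem_span_range_iff_exists_fun] at hp
    obtain ⟨c, rfl⟩ := hp
    rw [map_sum]
    exact Finset.sum_eq_zero fun i _ => hmul _ _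

theorem gk_zero {n : ℕ} (D : ℕ) (hD : Odd D) (H : Fin n → MvPolynomial (Fin n) ℝ)
    (hH : ∀ i, (H i).totalDegree ≤ D) :
    ∃ E : Set ℝ, E.Countable ∧ ∀ ε ∉ E, ∃ x : Fin n → ℝ, ∀ i, x i ^ D = ε * eval x (H i) := by
  obtain ⟨E, hE, h⟩ := gk_good D H hH
  refine ⟨E, hE, fun ε hε => ?_⟩
  obtain ⟨hli, hsp⟩ := h ε hε
  obtain ⟨T, hs, hT⟩ := gk_finrank D hD.pos _ hli hsp
  set G := (fun i => X i ^ D - C ε * H i : Fin n → MvPolynomial (Fin n) ℝ) with hG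
  let I := Ideal.span (Set.range G)
  have hker : LinearMap.ker T = I.restrictScalars ℝ := by
    ext p; simp [hT, I]
  let e1 : (MvPolynomial (Fin n) ℝ ⧸ I.restrictScalars ℝ) ≃ₗ[ℝ] (MvPolynomial (Fin n) ℝ ⧸ I) :=
    Submodule.Quotient.restrictScalarsEquiv ℝ I
  let e2 : (MvPolynomial (Fin n) ℝ ⧸ I.restrictScalars ℝ) ≃ₗ[ℝ] ((Fin n → Fin D) → ℝ) :=
    (Submodule.quotEquivOfEq _ _ hker.symm).trans (T.quotKerEquivOfSurjective hs)
  let e := e2.symm.trans e1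
  have : Module.Finite ℝ (MvPolynomial (Fin n) ℝ ⧸ I) := Module.Finite.equiv e
  have hfr : Module.finrank ℝ (MvPolynomial (Fin n) ℝ ⧸ I) = D ^ n := by
    rw [← e.finrank_eq]; simp
  obtain ⟨f⟩ := gk_odd_module (A := MvPolynomial (Fin n) ℝ ⧸ I) _ (MvPolynomial (Fin n) ℝ ⧸ I) hfr
    hD.pow
  let g : MvPolynomial (Fin n) ℝ →ₐ[ℝ] ℝ := f.comp (Ideal.Quotient.mkₐ ℝ I)
  refine ⟨fun i => g (X i), fun i => ?_⟩
  have hg : ∀ p, g p = eval (fun i => g (X i)) p := by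
    intro p
    have : g = aeval (fun i => g (X i)) := by ext i; simp
    conv_lhs => rw [this]
    rfl
  have h0 : g (G i) = 0 := by
    have : Ideal.Quotient.mkₐ ℝ I (G i) = 0 := by
      rw [Ideal.Quotient.mkₐ_eq_mk, Ideal.Quotient.eq_zero_iff_mem]
      exact Ideal.subset_span ⟨i, rfl⟩
    change f (Ideal.Quotient.mkₐ ℝ I (G i)) = 0
    rw [this, map_zero]
  rw [hg] at h0
  simp only [hG, map_sub, map_pow, map_mul, eval_X, eval_C] at h0
  linarith

theorem gk_eval_smul {N D : ℕ} {f : MvPolynomial (Fin N) ℝ} (hf : f.IsHomogeneous D) (c : ℝ)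
    (y : Fin N → ℝ) : eval (c • y) f = c ^ D * eval y f := by
  rw [eval_eq', eval_eq', Finset.mul_sum]
  refine Finset.sum_congr rfl fun m hm => ?_
  have h : m.degree = D := by
    by_contra h
    exact (mem_support_iff.1 hm) (hf.coeff_eq_zero h)
  rw [Finsupp.degree_eq_sum] at h
  simp only [Pi.smul_apply, smul_eq_mul, mul_pow, Finset.prod_mul_distrib]
  rw [Finset.prod_pow_eq_pow_sum, h]
  ring

theorem gk_dehom {n D : ℕ} {f : MvPolynomial (Fin (n + 1)) ℝ} (hf : f.IsHomogeneous D) :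
    ∃ H : MvPolynomial (Fin n) ℝ, H.totalDegree ≤ D ∧
      ∀ x : Fin n → ℝ, eval x H = eval (Fin.cons 1 x : Fin (n + 1) → ℝ) f := by
  refine ⟨∑ m ∈ f.support, C (coeff m f) * ∏ i : Fin n, X i ^ (m i.succ), ?_, ?_⟩
  · refine totalDegree_finsetSum_le fun m hm => ?_
    have h : m.degree = D := by
      by_contra h
      exact (mem_support_iff.1 hm) (hf.coeff_eq_zero h)
    rw [Finsupp.degree_eq_sum, Fin.sum_univ_succ] at h
    refine (totalDegree_mul _ _).trans ?_
    rw [totalDegree_C, zero_add]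
    refine (totalDegree_finsetProd _ _).trans ?_
    simp only [totalDegree_X_pow]
    omega
  · intro x
    rw [eval_eq' _ f, map_sum]
    refine Finset.sum_congr rfl fun m hm => ?_
    rw [Fin.prod_univ_succ]
    simp [map_prod]

theorem gk_sphere_compact (N : ℕ) : IsCompact {y : Fin N → ℝ | ∑ i, y i ^ 2 = 1} := by
  refine Metric.isCompact_of_isClosed_isBounded ?_ ?_
  · exact isClosed_eq (by fun_prop) (by fun_prop)
  · refine (Metric.isBounded_closedBall (x := (0 : Fin N → ℝ)) (r := 1)).subset ?_
    intro y hy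
    rw [mem_closedBall_zero_iff, pi_norm_le_iff_of_nonneg zero_le_one]
    intro i
    have hy' : ∑ i, y i ^ 2 = 1 := hy
    have : y i ^ 2 ≤ 1 := by
      rw [← hy']; exact Finset.single_le_sum (f := fun i => y i ^ 2) (fun j _ => sq_nonneg _) (Finset.mem_univ i)
    rw [Real.norm_eq_abs]
    exact (sq_le_one_iff_abs_le_one _).1 this

theorem gk_sphere_abs {N : ℕ} {y : Fin N → ℝ} (hy : ∑ i, y i ^ 2 = 1) (i : Fin N) : |y i| ≤ 1 := by
  have : y i ^ 2 ≤ 1 := by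
    rw [← hy]; exact Finset.single_le_sum (f := fun i => y i ^ 2) (fun j _ => sq_nonneg _) (Finset.mem_univ i)
  exact (sq_le_one_iff_abs_le_one _).1 this

theorem gk_borsuk_ulam {n D : ℕ} (hD : Odd D) (f : Fin n → MvPolynomial (Fin (n + 1)) ℝ)
    (hf : ∀ i, (f i).IsHomogeneous D) :
    ∃ y : Fin (n + 1) → ℝ, ∑ i, y i ^ 2 = 1 ∧ ∀ i, eval y (f i) = 0 := by
  choose H hH1 hH2 using fun i => gk_dehom (hf i)
  obtain ⟨E, hE, hz⟩ := gk_zero D hD H hH1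
  have key : ∀ r : ℝ, ∃ ε > r, ∃ y : Fin (n + 1) → ℝ, ∑ i, y i ^ 2 = 1 ∧
      ∀ i, |ε * eval y (f i)| ≤ 1 := by
    intro r
    obtain ⟨ε, hε, hr⟩ := (hE.dense_compl ℝ).exists_gt r
    obtain ⟨x, hx⟩ := hz ε hε
    set z : Fin (n + 1) → ℝ := Fin.cons 1 x with hzd
    have hpos : 0 < ∑ i, z i ^ 2 := by
      rw [Fin.sum_univ_succ]
      have : 0 ≤ ∑ i : Fin n, z i.succ ^ 2 := Finset.sum_nonneg fun j _ => sq_nonneg _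
      have h0 : z 0 = 1 := by simp [hzd]
      rw [h0]; linarith
    set s := (√(∑ i, z i ^ 2))⁻¹ with hs
    have hsum : ∑ i, (s • z) i ^ 2 = 1 := by
      simp only [Pi.smul_apply, smul_eq_mul, mul_pow]
      rw [← Finset.mul_sum, hs, inv_pow, Real.sq_sqrt hpos.le]
      exact inv_mul_cancel₀ hpos.ne'
    refine ⟨ε, hr, s • z, hsum, fun i => ?_⟩
    have h1 : ε * eval (s • z) (f i) = ((s • z) i.succ) ^ D := by
      rw [gk_eval_smul (hf i), ← hH2, Pi.smul_apply, smul_eq_mul, mul_pow]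
      have : z i.succ = x i := by simp [hzd]
      rw [this, hx i]; ring
    rw [h1, abs_pow]
    exact pow_le_one₀ (abs_nonneg _) (gk_sphere_abs hsum _)
  obtain ⟨y0, hy0, hmin⟩ := (gk_sphere_compact (n + 1)).exists_isMinOn
    (f := fun y => ∑ i, |eval y (f i)|) (by
      obtain ⟨ε, _, y, hy, _⟩ := key 0
      exact ⟨y, hy⟩) (by
      apply Continuous.continuousOn
      refine continuous_finsetSum _ fun i _ => ?_
      exact (MvPolynomial.continuous_eval (f i)).abs)
  have h0 : ∑ i, |eval y0 (f i)| = 0 := by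
    by_contra hne
    have hpos : 0 < ∑ i, |eval y0 (f i)| :=
      lt_of_le_of_ne (Finset.sum_nonneg fun _ _ => abs_nonneg _) (Ne.symm hne)
    set F := ∑ i, |eval y0 (f i)| with hF
    obtain ⟨ε, hε, y, hy, hb⟩ := key (n / F)
    have hε0 : 0 < ε := lt_of_le_of_lt (by positivity) hε
    have h1 : F ≤ ∑ i, |eval y (f i)| := hmin hy
    have h2 : ε * ∑ i, |eval y (f i)| ≤ n := by
      rw [Finset.mul_sum]
      calc _ ≤ ∑ i : Fin n, (1 : ℝ) := Finset.sum_le_sum fun i _ => by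
            have := hb i
            rwa [abs_mul, abs_of_pos hε0] at this
        _ = n := by simp
    rw [gt_iff_lt, div_lt_iff₀ hpos] at hε
    have := mul_le_mul_of_nonneg_left h1 hε0.le
    linarith
  refine ⟨y0, hy0, fun i => ?_⟩
  have := (Finset.sum_eq_zero_iff_of_nonneg (fun _ _ => abs_nonneg _)).1 h0 i (Finset.mem_univ i)
  exact abs_eq_zero.1 this

theorem gk_hs_poly {n : ℕ} {X' : Type} (v : X' → Fin (n + 1) → ℝ) (S : Fin n → Finset X')
    (q : Polynomial ℝ) (hq : ∀ j, Even j → q.coeff j = 0) :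
    ∃ y : Fin (n + 1) → ℝ, ∑ i, y i ^ 2 = 1 ∧ ∀ i, ∑ x ∈ S i, q.eval (∑ l, y l * v x l) = 0 := by
  set M := 2 * q.natDegree + 1 with hM
  let L : X' → MvPolynomial (Fin (n + 1)) ℝ := fun x => ∑ l, C (v x l) * X l
  let R : MvPolynomial (Fin (n + 1)) ℝ := ∑ l, X l ^ 2
  have hL : ∀ x, (L x).IsHomogeneous 1 := fun x =>
    IsHomogeneous.sum _ _ _ fun l _ => isHomogeneous_C_mul_X _ _
  have hR : R.IsHomogeneous 2 := IsHomogeneous.sum _ _ _ fun l _ => isHomogeneous_X_pow _ _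
  obtain ⟨y, hy, h⟩ := gk_borsuk_ulam (D := M) (by rw [hM]; exact ⟨_, rfl⟩) (fun i => ∑ x ∈ S i,
      ∑ j ∈ Finset.range (q.natDegree + 1), C (q.coeff j) * (L x ^ j * R ^ ((M - j) / 2))) (by
    intro i
    refine IsHomogeneous.sum _ _ _ fun x _ => IsHomogeneous.sum _ _ _ fun j hj => ?_
    rcases Nat.even_or_odd j with he | ho
    · rw [hq j he, C_0, zero_mul]; exact isHomogeneous_zero _ _ _
    · apply IsHomogeneous.C_mul
      have h1 : 1 * j + 2 * ((M - j) / 2) = M := by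
        obtain ⟨a, rfl⟩ := ho
        rw [Finset.mem_range] at hj
        omega
      have := ((hL x).pow j).mul (hR.pow ((M - j) / 2))
      rwa [h1] at this)
  refine ⟨y, hy, fun i => ?_⟩
  rw [← h i, map_sum]
  refine Finset.sum_congr rfl fun x _ => ?_
  rw [Polynomial.eval_eq_sum_range, map_sum]
  refine Finset.sum_congr rfl fun j _ => ?_
  have hRy : eval y R = 1 := by simp [R, hy]
  have hLy : eval y (L x) = ∑ l, y l * v x l := by simp [L, mul_comm]
  simp [hRy, hLy]

theorem gk_hs_approx {n : ℕ} {X' : Type} [Fintype X'] (v : X' → Fin (n + 1) → ℝ)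
    (S : Fin n → Finset X') (ψ : ℝ → ℝ) (hψ : Continuous ψ) (hodd : ∀ t, ψ (-t) = - ψ t)
    (δ : ℝ) (hδ : 0 < δ) :
    ∃ y : Fin (n + 1) → ℝ, ∑ i, y i ^ 2 = 1 ∧
      ∀ i, |∑ x ∈ S i, ψ (∑ l, y l * v x l)| ≤ (S i).card * δ := by
  set B := ∑ x, ∑ l, |v x l| with hB
  obtain ⟨p, hp⟩ := exists_polynomial_near_of_continuousOn (-B) B ψ hψ.continuousOn δ hδ
  set q : Polynomial ℝ := Polynomial.C (1 / 2) * (p - p.comp (-Polynomial.X)) with hq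
  obtain ⟨y, hy, h⟩ := gk_hs_poly v S q (by
    intro j hj
    have hc : (p.comp (-Polynomial.X)).coeff j = p.coeff j := by
      have := Polynomial.comp_C_mul_X_coeff (r := (-1 : ℝ)) (p := p) (n := j)
      rw [hj.neg_one_pow, mul_one] at this
      rw [← this]; simp
    rw [hq, Polynomial.coeff_C_mul, Polynomial.coeff_sub, hc, sub_self, mul_zero])
  refine ⟨y, hy, fun i => ?_⟩
  have hnear : ∀ x, |ψ (∑ l, y l * v x l) - q.eval (∑ l, y l * v x l)| ≤ δ := by
    intro x
    set t := ∑ l, y l * v x l with ht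
    have htB : |t| ≤ B := by
      calc |t| ≤ ∑ l, |y l * v x l| := Finset.abs_sum_le_sum_abs _ _
        _ ≤ ∑ l, |v x l| := Finset.sum_le_sum fun l _ => by
            rw [abs_mul]
            exact mul_le_of_le_one_left (abs_nonneg _) (gk_sphere_abs hy l)
        _ ≤ B := Finset.single_le_sum (f := fun x => ∑ l, |v x l|)
            (fun x _ => Finset.sum_nonneg fun _ _ => abs_nonneg _) (Finset.mem_univ x)
    have h1 := hp t (abs_le.1 htB)
    have h2 := hp (-t) (abs_le.1 (by rwa [abs_neg]))
    rw [hodd] at h2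
    have h3 : q.eval t = (p.eval t - p.eval (-t)) / 2 := by
      simp [hq, Polynomial.eval_comp]; ring
    rw [h3]
    rw [abs_lt] at h1 h2
    rw [abs_le]
    constructor <;> linarith [h1.1, h1.2, h2.1, h2.2]
  have : ∑ x ∈ S i, ψ (∑ l, y l * v x l) =
      ∑ x ∈ S i, (ψ (∑ l, y l * v x l) - q.eval (∑ l, y l * v x l)) := by
    rw [Finset.sum_sub_distrib, h i, sub_zero]
  rw [this]
  refine (Finset.abs_sum_le_sum_abs _ _).trans ?_
  refine (Finset.sum_le_sum fun x _ => hnear x).trans ?_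
  simp

theorem gk_count {X' : Type} (S : Finset X') (t : ℕ → X' → ℝ) (a : X' → ℝ)
    (hta : ∀ x, Filter.Tendsto (fun j => t j x) Filter.atTop (nhds (a x)))
    (κ : ℕ → ℝ) (hκ : Filter.Tendsto κ Filter.atTop Filter.atTop)
    (hs : ∀ j, ∑ x ∈ S, max (-1) (min 1 (κ j * t j x)) ≤ S.card * (κ j)⁻¹) :
    2 * (S.filter fun x => 0 < a x).card ≤ S.card := by
  have h1 : ∀ᶠ j in Filter.atTop, ∀ x ∈ S.filter (fun x => 0 < a x), 1 ≤ κ j * t j x := by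
    rw [Filter.eventually_all_finset]
    intro x hx
    exact (hκ.atTop_mul_pos (Finset.mem_filter.1 hx).2 (hta x)).eventually_ge_atTop 1
  have h2 : ∀ᶠ j in Filter.atTop, (S.card : ℝ) * (κ j)⁻¹ < 1 := by
    have : Filter.Tendsto (fun j => (S.card : ℝ) * (κ j)⁻¹) Filter.atTop (nhds (S.card * 0)) :=
      (tendsto_inv_atTop_zero.comp hκ).const_mul _
    rw [mul_zero] at this
    exact this.eventually_lt_const one_pos
  obtain ⟨j, hj1, hj2⟩ := (h1.and h2).exists
  have h3 := hs j
  rw [← Finset.sum_filter_add_sum_filter_not S (fun x => 0 < a x)] at h3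
  have h4 : ((S.filter fun x => 0 < a x).card : ℝ) ≤
      ∑ x ∈ S.filter (fun x => 0 < a x), max (-1) (min 1 (κ j * t j x)) := by
    rw [Finset.card_eq_sum_ones, Nat.cast_sum]
    refine Finset.sum_le_sum fun x hx => ?_
    rw [min_eq_left (hj1 x hx)]; simp
  have h5 : -((S.filter fun x => ¬ 0 < a x).card : ℝ) ≤
      ∑ x ∈ S.filter (fun x => ¬ 0 < a x), max (-1) (min 1 (κ j * t j x)) := by
    rw [Finset.card_eq_sum_ones, Nat.cast_sum, ← Finset.sum_neg_distrib]
    refine Finset.sum_le_sum fun x hx => ?_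
    simp
  have h6 := Finset.card_filter_add_card_filter_not (s := S) (fun x => 0 < a x)
  have h7 : ((S.filter fun x => 0 < a x).card : ℝ) < (S.filter fun x => ¬ 0 < a x).card + 1 := by
    linarith
  have h8 : (S.filter fun x => 0 < a x).card < (S.filter fun x => ¬ 0 < a x).card + 1 := by
    exact_mod_cast h7
  omega

theorem gk_ham_sandwich {n : ℕ} {X' : Type} [Fintype X'] (v : X' → Fin (n + 1) → ℝ)
    (S : Fin n → Finset X') :
    ∃ y : Fin (n + 1) → ℝ, y ≠ 0 ∧ ∀ i,
      2 * ((S i).filter fun x => 0 < ∑ l, y l * v x l).card ≤ (S i).card ∧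
      2 * ((S i).filter fun x => ∑ l, y l * v x l < 0).card ≤ (S i).card := by
  choose y hy hb using fun j : ℕ => gk_hs_approx v S
    (fun t => max (-1) (min 1 (((j : ℝ) + 1) * t))) (by fun_prop) (by
      intro t
      rw [mul_neg]
      generalize ((j : ℝ) + 1) * t = s
      rw [← min_neg_neg, neg_neg]
      rw [← max_neg_neg, min_max_distrib_left]
      rw [min_eq_right (by norm_num : (-1 : ℝ) ≤ 1)]) (((j : ℝ) + 1)⁻¹) (by positivity)
  obtain ⟨y0, hy0, φ, hφ, hlim⟩ := (gk_sphere_compact (n + 1)).tendsto_subseq hy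
  refine ⟨y0, ?_, fun i => ?_⟩
  · rintro rfl
    have : ∑ i : Fin (n + 1), (0 : Fin (n + 1) → ℝ) i ^ 2 = 1 := hy0
    simp at this
  · have hκ : Filter.Tendsto (fun j => ((φ j : ℕ) : ℝ) + 1) Filter.atTop Filter.atTop :=
      Filter.tendsto_atTop_add_const_right _ _ (tendsto_natCast_atTop_atTop.comp hφ.tendsto_atTop)
    have hta : ∀ x, Filter.Tendsto (fun j => ∑ l, y (φ j) l * v x l) Filter.atTop
        (nhds (∑ l, y0 l * v x l)) := by
      intro x
      refine tendsto_finsetSum _ fun l _ => ?_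
      exact ((tendsto_pi_nhds.1 hlim) l).mul_const _
    constructor
    · exact gk_count (S i) _ _ hta _ hκ fun j => (le_abs_self _).trans (hb (φ j) i)
    · have := gk_count (S i) _ _ (fun x => (hta x).neg) _ hκ fun j => by
        refine le_trans ?_ ((neg_le_abs _).trans (hb (φ j) i))
        rw [← Finset.sum_neg_distrib]
        refine Finset.sum_le_sum fun x _ => le_of_eq ?_
        rw [mul_neg]
        generalize ((φ j : ℝ) + 1) * _ = s
        rw [← min_neg_neg, neg_neg]
        rw [← max_neg_neg, min_max_distrib_left]
        rw [min_eq_right (by norm_num : (-1 : ℝ) ≤ 1)]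
      simpa using this

theorem gk_poly_hs {d m N : ℕ} (hN : N < (m + 1) ^ d) {X' : Type} [Fintype X']
    (pt : X' → Fin d → ℝ) (S : Fin N → Finset X') :
    ∃ Q : MvPolynomial (Fin d) ℝ, Q ≠ 0 ∧ Q.totalDegree ≤ d * m ∧ ∀ i,
      2 * ((S i).filter fun x => 0 < eval (pt x) Q).card ≤ (S i).card ∧
      2 * ((S i).filter fun x => eval (pt x) Q < 0).card ≤ (S i).card := by
  classical
  obtain ⟨e⟩ : Nonempty (Fin (N + 1) ↪ (Fin d → Fin (m + 1))) := by
    apply Function.Embedding.nonempty_of_card_le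
    simpa using hN
  let μ : Fin (N + 1) → (Fin d →₀ ℕ) := fun l =>
    Finsupp.equivFunOnFinite.symm fun i => (e l i : ℕ)
  have hμ : Function.Injective μ := by
    intro l l' h
    apply e.injective
    ext i
    have := DFunLike.congr_fun h i
    simpa [μ] using this
  obtain ⟨y, hy, hb⟩ := gk_ham_sandwich (fun x l => eval (pt x) (monomial (μ l) (1 : ℝ))) S
  let Q : MvPolynomial (Fin d) ℝ := ∑ l, monomial (μ l) (y l)
  have hQ : ∀ x, eval (pt x) Q = ∑ l, y l * eval (pt x) (monomial (μ l) (1 : ℝ)) := by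
    intro x
    simp only [Q, map_sum]
    refine Finset.sum_congr rfl fun l _ => ?_
    simp [eval_monomial]
  refine ⟨Q, ?_, ?_, ?_⟩
  · intro h0
    apply hy
    ext l
    have := congrArg (coeff (μ l)) h0
    simp only [Q, coeff_sum, coeff_monomial, coeff_zero] at this
    rw [Finset.sum_eq_single l (fun l' _ hl' => if_neg fun h => hl' (hμ h)) (by simp)] at this
    simpa using this
  · refine totalDegree_finsetSum_le fun l _ => ?_
    refine (totalDegree_monomial_le _ _).trans ?_
    change (μ l).degree ≤ _
    rw [Finsupp.degree_eq_sum]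
    calc _ ≤ ∑ i : Fin d, m := Finset.sum_le_sum fun i _ => by
          simp only [μ, Finsupp.equivFunOnFinite_symm_apply_apply]
          have := (e l i).2
          omega
      _ = d * m := by simp
  · intro i
    simp only [hQ]
    exact hb i

open Classical in
def gkInv {d : ℕ} {X' : Type} [Fintype X'] (pt : X' → Fin d → ℝ) (j B : ℕ)
    (P : MvPolynomial (Fin d) ℝ) : Prop :=
  P ≠ 0 ∧ P.totalDegree ≤ B ∧ ∃ c : X' → ℕ, (∀ x, c x < 2 ^ j) ∧
    (∀ i, 2 ^ j * (Finset.univ.filter fun x => eval (pt x) P ≠ 0 ∧ c x = i).card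
      ≤ Fintype.card X') ∧
    ∀ U : Set (Fin d → ℝ), IsPreconnected U → (∀ y ∈ U, eval y P ≠ 0) →
      ∀ x x', pt x ∈ U → pt x' ∈ U → c x = c x'

theorem gk_sign {d : ℕ} {U : Set (Fin d → ℝ)} (hU : IsPreconnected U)
    (Q : MvPolynomial (Fin d) ℝ) (hQ : ∀ y ∈ U, eval y Q ≠ 0) {a b : Fin d → ℝ} (ha : a ∈ U)
    (hb : b ∈ U) (h : 0 < eval a Q) : 0 < eval b Q := by
  by_contra hn
  push Not at hn
  obtain ⟨z, hz, hz0⟩ := hU.intermediate_value hb ha (MvPolynomial.continuous_eval Q).continuousOn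
    ⟨hn, h.le⟩
  exact hQ z hz hz0

theorem gk_step {d : ℕ} {X' : Type} [Fintype X'] (pt : X' → Fin d → ℝ) {j B m : ℕ}
    {P : MvPolynomial (Fin d) ℝ} (h : gkInv pt j B P) (hm : 2 ^ j < (m + 1) ^ d) :
    ∃ P', gkInv pt (j + 1) (B + d * m) P' := by
  classical
  obtain ⟨hP, hdeg, c, hc, hcard, hconn⟩ := h
  obtain ⟨Q, hQ, hQd, hQb⟩ := gk_poly_hs hm pt
    (fun i : Fin (2 ^ j) => Finset.univ.filter fun x => eval (pt x) P ≠ 0 ∧ c x = i)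
  refine ⟨P * Q, mul_ne_zero hP hQ, (totalDegree_mul _ _).trans (add_le_add hdeg hQd),
    fun x => 2 * c x + if 0 < eval (pt x) Q then 1 else 0, ?_, ?_, ?_⟩
  · intro x
    have := hc x
    rw [pow_succ]
    dsimp only
    split_ifs <;> omega
  · intro i
    by_cases hi : i / 2 < 2 ^ j
    · have h1 := hQb ⟨i / 2, hi⟩
      have h2 := hcard (i / 2)
      set S := (Finset.univ.filter fun x => eval (pt x) P ≠ 0 ∧ c x = i / 2) with hS
      suffices h3 : 2 * (Finset.univ.filter fun x => eval (pt x) (P * Q) ≠ 0 ∧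
          (2 * c x + if 0 < eval (pt x) Q then 1 else 0) = i).card ≤ S.card by
        rw [pow_succ, mul_assoc]
        refine le_trans (Nat.mul_le_mul_left _ ?_) h2
        convert h3
      rcases Nat.mod_two_eq_zero_or_one i with h0 | h0
      · refine le_trans (Nat.mul_le_mul_left _ (Finset.card_le_card ?_)) h1.2
        intro x
        simp only [Finset.mem_filter, Finset.mem_univ, true_and, map_mul, mul_ne_zero_iff, hS]
        rintro ⟨⟨ha, hb⟩, hx⟩
        split_ifs at hx with hq
        · omega
        · exact ⟨⟨ha, by omega⟩, lt_of_le_of_ne (not_lt.1 hq) hb⟩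
      · refine le_trans (Nat.mul_le_mul_left _ (Finset.card_le_card ?_)) h1.1
        intro x
        simp only [Finset.mem_filter, Finset.mem_univ, true_and, map_mul, mul_ne_zero_iff, hS]
        rintro ⟨⟨ha, hb⟩, hx⟩
        split_ifs at hx with hq
        · exact ⟨⟨ha, by omega⟩, hq⟩
        · omega
    · rw [Finset.card_eq_zero.2, mul_zero]
      · exact Nat.zero_le _
      · rw [Finset.filter_eq_empty_iff]
        rintro x _ ⟨_, hx⟩
        have := hc x
        dsimp only at hx
        split_ifs at hx <;> omega
  · intro U hU hne x x' hx hx'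
    have hneP : ∀ y ∈ U, eval y P ≠ 0 := fun y hy h => hne y hy (by simp [h])
    have hneQ : ∀ y ∈ U, eval y Q ≠ 0 := fun y hy h => hne y hy (by simp [h])
    have h1 := hconn U hU hneP x x' hx hx'
    have h2 : 0 < eval (pt x) Q ↔ 0 < eval (pt x') Q :=
      ⟨gk_sign hU Q hneQ hx hx', gk_sign hU Q hneQ hx' hx⟩
    simp only [h1, h2]

theorem gk_init {d : ℕ} {X' : Type} [Fintype X'] (pt : X' → Fin d → ℝ) : gkInv pt 0 0 1 := by
  classical
  refine ⟨one_ne_zero, by simp, fun _ => 0, by simp, fun i => ?_, by simp⟩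
  rw [pow_zero, one_mul]
  exact Finset.card_le_univ _

theorem gk_block {d : ℕ} {X' : Type} [Fintype X'] (pt : X' → Fin d → ℝ) {k B : ℕ}
    {P : MvPolynomial (Fin d) ℝ} (h : gkInv pt (k * d) B P) :
    ∀ t ≤ d, ∃ P', gkInv pt (k * d + t) (B + t * (d * 2 ^ (k + 1))) P' := by
  intro t
  induction t with
  | zero => intro _; exact ⟨P, by simpa using h⟩
  | succ t ih =>
    intro ht
    obtain ⟨P', hP'⟩ := ih (by omega)
    obtain ⟨P'', hP''⟩ := gk_step pt hP' (m := 2 ^ (k + 1)) (by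
      calc 2 ^ (k * d + t) ≤ 2 ^ ((k + 1) * d) := by
            apply Nat.pow_le_pow_right (by norm_num); rw [add_mul]; omega
        _ = (2 ^ (k + 1)) ^ d := by rw [pow_mul]
        _ < _ := Nat.pow_lt_pow_left (Nat.lt_succ_self _) (by omega))
    refine ⟨P'', ?_⟩
    convert hP'' using 1 <;> ring

theorem gk_all {d : ℕ} {X' : Type} [Fintype X'] (pt : X' → Fin d → ℝ) (K : ℕ) :
    ∃ P, gkInv pt (K * d) (2 * d ^ 2 * 2 ^ K) P := by
  induction K with
  | zero =>
    obtain ⟨h1, h2, h3⟩ := gk_init pt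
    refine ⟨1, h1, h2.trans (Nat.zero_le _), ?_⟩
    simpa using h3
  | succ K ih =>
    obtain ⟨P, hP⟩ := ih
    obtain ⟨P', hP'⟩ := gk_block pt hP d le_rfl
    refine ⟨P', ?_⟩
    convert hP' using 1 <;> ring

/-- **Guth–Katz polynomial partitioning for points.** For every `d ≥ 1` there is a constant
`C_d` such that for every finite point set `P ⊆ ℝ^d` and integer `D ≥ 1` there is a nonzero
`d`-variate real polynomial `p` of degree at most `D` such that each connected component of
`ℝ^d \ Z(p)` contains at most `C_d·|P|/D^d` points of `P`. -/
theorem guth_katz_polynomial_partitioning (d : ℕ) (hd : 1 ≤ d) :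
    ∃ C : ℝ, 0 < C ∧
      ∀ (P : Finset (Fin d → ℝ)) (D : ℕ), 1 ≤ D →
        ∃ p : MvPolynomial (Fin d) ℝ, p ≠ 0 ∧ p.totalDegree ≤ D ∧
          ∀ x : Fin d → ℝ, eval x p ≠ 0 →
            (Set.ncard (↑P ∩ connectedComponentIn {y : Fin d → ℝ | eval y p ≠ 0} x) : ℝ)
              ≤ C * (P.card : ℝ) / (D : ℝ) ^ d := by
  classical
  refine ⟨((4 * d ^ 2 : ℕ) : ℝ) ^ d, by positivity, fun P D hD => ?_⟩
  let pt : P → Fin d → ℝ := fun x => x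
  obtain ⟨K, B, p, hinv, hB, hDK⟩ : ∃ K B p, gkInv pt (K * d) B p ∧ B ≤ D ∧
      D ≤ 4 * d ^ 2 * 2 ^ K := by
    have hd2 : 0 < 2 * d ^ 2 := by positivity
    by_cases hlt : D < 2 * d ^ 2
    · refine ⟨0, 0, 1, by simpa using gk_init pt, Nat.zero_le _, ?_⟩
      simp; omega
    · push Not at hlt
      have hne : D / (2 * d ^ 2) ≠ 0 := (Nat.div_pos hlt hd2).ne'
      obtain ⟨p, hp⟩ := gk_all pt (Nat.log 2 (D / (2 * d ^ 2)))
      refine ⟨_, _, p, hp, ?_, ?_⟩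
      · have := Nat.pow_log_le_self 2 hne
        calc _ ≤ 2 * d ^ 2 * (D / (2 * d ^ 2)) := Nat.mul_le_mul_left _ this
          _ ≤ D := Nat.mul_div_le _ _
      · have := Nat.lt_pow_succ_log_self (b := 2) (by norm_num) (D / (2 * d ^ 2))
        rw [Nat.div_lt_iff_lt_mul hd2, Nat.succ_eq_add_one, pow_succ] at this
        refine this.le.trans (le_of_eq ?_)
        ring
  obtain ⟨hp0, hpd, c, hc, hcard, hconn⟩ := hinv
  refine ⟨p, hp0, hpd.trans hB, fun x hx => ?_⟩
  set U := connectedComponentIn {y : Fin d → ℝ | eval y p ≠ 0} x with hU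
  have hUp : IsPreconnected U := isPreconnected_connectedComponentIn
  have hUs : ∀ y ∈ U, eval y p ≠ 0 := fun y hy => connectedComponentIn_subset _ _ hy
  have key : 2 ^ (K * d) * Set.ncard ((P : Set (Fin d → ℝ)) ∩ U) ≤ P.card := by
    rcases Set.eq_empty_or_nonempty ((P : Set (Fin d → ℝ)) ∩ U) with he | ⟨x0, hx0P, hx0U⟩
    · rw [he]; simp
    · have h1 := hcard (c ⟨x0, hx0P⟩)
      rw [Fintype.card_coe] at h1
      refine le_trans (Nat.mul_le_mul_left _ ?_) h1
      rw [← Finset.card_map (Function.Embedding.subtype _), ← Set.ncard_coe_finset]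
      refine Set.ncard_le_ncard ?_ (Finset.finite_toSet _)
      rintro z ⟨hzP, hzU⟩
      simp only [Finset.coe_map, Set.mem_image, Finset.mem_coe, Finset.mem_filter,
        Finset.mem_univ, true_and]
      exact ⟨⟨z, hzP⟩, ⟨hUs z hzU, hconn U hUp hUs _ _ hzU hx0U⟩, rfl⟩
  have hDpos : (0 : ℝ) < (D : ℝ) ^ d := by positivity
  rw [le_div_iff₀ hDpos]
  have h1 : D ^ d ≤ (4 * d ^ 2) ^ d * 2 ^ (K * d) := by
    rw [pow_mul, ← mul_pow]; exact Nat.pow_le_pow_left hDK d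
  have h2 : Set.ncard ((P : Set (Fin d → ℝ)) ∩ U) * D ^ d ≤ (4 * d ^ 2) ^ d * P.card := by
    calc _ ≤ Set.ncard ((P : Set (Fin d → ℝ)) ∩ U) * ((4 * d ^ 2) ^ d * 2 ^ (K * d)) :=
          Nat.mul_le_mul_left _ h1
      _ = (4 * d ^ 2) ^ d * (2 ^ (K * d) * Set.ncard ((P : Set (Fin d → ℝ)) ∩ U)) := by ring
      _ ≤ _ := Nat.mul_le_mul_left _ key
  exact_mod_cast h2
end

section
/- (Warren's bound.) For every positive integer d there is a constant C_d such that for every nonzero d-variate real polynomial f of degree at most D ≥ 1, the number of connected components of ℝ^d \ Z(f) is at most C_d·D^d. -/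
open MvPolynomial

lemma wr_hasDerivAt {d : ℕ} (p : MvPolynomial (Fin d) ℝ) (z : Fin d → ℝ) (i : Fin d) :
    HasDerivAt (fun t : ℝ => eval (Function.update z i t) p) (eval z (pderiv i p)) (z i) := by
  induction p using MvPolynomial.induction_on with
  | C a => simpa using hasDerivAt_const (z i) a
  | add p q hp hq =>
    simp only [map_add]
    exact hp.add hq
  | mul_X p j hp =>
    have hj : HasDerivAt (fun t : ℝ => Function.update z i t j)
        (eval z (pderiv i (X j : MvPolynomial (Fin d) ℝ))) (z i) := by
      by_cases h : j = i
      · subst h; simp only [Function.update_self, pderiv_X_self, map_one]; exact hasDerivAt_id (z j)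
      · simpa [Function.update_of_ne h, pderiv_X_of_ne h] using hasDerivAt_const (z i) (z j)
    have := hp.mul hj
    rw [Function.update_eq_self] at this
    have e : eval z (pderiv i (p * X j)) =
        eval z (pderiv i p) * z j + eval z p * eval z (pderiv i (X j)) := by
      rw [pderiv_mul, map_add, map_mul, map_mul, eval_X]
    rw [e]
    simp only [map_mul, eval_X]
    exact this

lemma wr_growth {d D : ℕ} (f : MvPolynomial (Fin d) ℝ) (hD : f.totalDegree ≤ D) :
    ∃ c : ℝ, 0 ≤ c ∧ ∀ x : Fin d → ℝ, 1 ≤ ‖x‖ → |eval x f| ≤ c * ‖x‖ ^ D := by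
  refine ⟨∑ s ∈ f.support, |coeff s f|, Finset.sum_nonneg fun _ _ => abs_nonneg _, ?_⟩
  intro x hx
  rw [eval_eq', Finset.sum_mul]
  refine (Finset.abs_sum_le_sum_abs _ _).trans (Finset.sum_le_sum fun s hs => ?_)
  rw [abs_mul]
  refine mul_le_mul_of_nonneg_left ?_ (abs_nonneg _)
  rw [Finset.abs_prod]
  calc ∏ i, |x i ^ s i| ≤ ∏ i, ‖x‖ ^ s i := by
        refine Finset.prod_le_prod (fun _ _ => abs_nonneg _) fun i _ => ?_
        rw [abs_pow]
        exact pow_le_pow_left₀ (abs_nonneg _) (norm_le_pi_norm x i) _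
    _ = ‖x‖ ^ (∑ i, s i) := by rw [Finset.prod_pow_eq_pow_sum]
    _ ≤ ‖x‖ ^ D := by
        refine pow_le_pow_right₀ hx (le_trans ?_ hD)
        have := le_totalDegree hs
        rwa [Finsupp.sum_fintype _ _ (fun _ => rfl)] at this

lemma wr_totalDegree_pderiv {d D : ℕ} (f : MvPolynomial (Fin d) ℝ) (hD : f.totalDegree ≤ D)
    (i : Fin d) : (pderiv i f).totalDegree ≤ D := by
  classical
  conv_lhs => rw [f.as_sum, map_sum]
  refine totalDegree_finsetSum_le fun s hs => ?_
  rw [pderiv_monomial]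
  refine (totalDegree_monomial_le _ _).trans (le_trans ?_ ((le_totalDegree hs).trans hD))
  rw [Finsupp.sum_fintype _ _ (fun _ => rfl), Finsupp.sum_fintype _ _ (fun _ => rfl)]
  exact Finset.sum_le_sum fun j _ => by simp

lemma wr_count {d n : ℕ} {ι : Type*} [Fintype ι] (z : ι → Fin d → ℝ)
    (hz : Function.Injective z) (q : Fin d → MvPolynomial (Fin d) ℝ)
    (hq : ∀ i, (q i).totalDegree ≤ n)
    (h : ∀ j i, z j i ^ (n + 1) = eval (z j) (q i)) :
    Fintype.card ι ≤ (n + 1) ^ d := by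
  classical
  let b : (Fin d → Fin (n + 1)) → (ι → ℝ) := fun a j => ∏ i, z j i ^ (a i : ℕ)
  let W := Submodule.span ℝ (Set.range b)
  have key : ∀ N : ℕ, ∀ p : MvPolynomial (Fin d) ℝ, p.totalDegree ≤ N →
      (fun j => eval (z j) p) ∈ W := by
    intro N
    induction N using Nat.strong_induction_on with
    | _ N ih =>
    intro p hp
    have e : (fun j => eval (z j) p)
        = ∑ s ∈ p.support, coeff s p • (fun j => ∏ i, z j i ^ s i) := by
      ext j
      simp [eval_eq']
    rw [e]
    refine Submodule.sum_mem _ fun s hs => Submodule.smul_mem _ _ ?_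
    have hsN : ∑ i, s i ≤ N := by
      have := (le_totalDegree hs).trans hp
      rwa [Finsupp.sum_fintype _ _ (fun _ => rfl)] at this
    by_cases hb : ∀ i, s i < n + 1
    · exact Submodule.subset_span ⟨fun i => ⟨s i, hb i⟩, rfl⟩
    · push Not at hb
      obtain ⟨i, hi⟩ := hb
      let s' : Fin d →₀ ℕ := s - Finsupp.single i (n + 1)
      have hss : s = s' + Finsupp.single i (n + 1) := by
        ext k
        by_cases hk : k = i
        · subst hk; simp [s']; omega
        · simp [s', Finsupp.single_eq_of_ne hk]
      have hsum : ∑ k, s k = ∑ k, s' k + (n + 1) := by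
        rw [hss]; simp [Finset.sum_add_distrib, Finsupp.single_apply]
      have hdeg : (monomial s' (1 : ℝ) * q i).totalDegree ≤ N - 1 := by
        refine (totalDegree_mul _ _).trans ?_
        have h1 := totalDegree_monomial_le s' (1 : ℝ)
        rw [Finsupp.sum_fintype _ _ (fun _ => rfl)] at h1
        have := hq i
        simp only [id] at h1
        omega
      have := ih (N - 1) (by omega) _ hdeg
      convert this using 1
      ext j
      rw [map_mul, ← h j i, eval_monomial, one_mul, Finsupp.prod_fintype _ _ (fun _ => pow_zero _)]
      conv_lhs => rw [hss]
      simp only [Finsupp.add_apply, pow_add, Finset.prod_mul_distrib]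
      congr 1
      rw [Finset.prod_eq_single i]
      · simp [pow_succ]
      · intro k _ hk; simp [Finsupp.single_eq_of_ne hk]
      · simp
  have htop : W = ⊤ := by
    rw [eq_top_iff]
    intro g _
    have hg : g = ∑ j, g j • (Pi.single j (1 : ℝ) : ι → ℝ) := by
      ext k; simp [Finset.sum_apply, Pi.single_apply]
    rw [hg]
    refine Submodule.sum_mem _ fun j _ => Submodule.smul_mem _ _ ?_
    let p : MvPolynomial (Fin d) ℝ :=
      ∏ k ∈ Finset.univ.erase j, ∑ i, (X i - C (z k i)) ^ 2
    have hpj : eval (z j) p ≠ 0 := by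
      simp only [p, map_prod, map_sum, map_pow, map_sub, eval_X, eval_C]
      refine Finset.prod_ne_zero_iff.2 fun k hk h0 => ?_
      rw [Finset.sum_eq_zero_iff_of_nonneg (fun _ _ => sq_nonneg _)] at h0
      refine (Finset.mem_erase.1 hk).1 (hz ?_)
      ext i
      have := h0 i (Finset.mem_univ _)
      have := pow_eq_zero_iff (two_ne_zero) |>.1 this
      linarith
    have hpk : ∀ k, k ≠ j → eval (z k) p = 0 := by
      intro k hk
      simp only [p, map_prod, map_sum, map_pow, map_sub, eval_X, eval_C]
      refine Finset.prod_eq_zero (Finset.mem_erase.2 ⟨hk, Finset.mem_univ k⟩) ?_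
      simp
    have : (Pi.single j (1 : ℝ) : ι → ℝ) = (eval (z j) p)⁻¹ • (fun k => eval (z k) p) := by
      ext k
      by_cases hk : k = j
      · subst hk; simp [hpj]
      · simp [hk, hpk k hk]
    rw [this]
    exact Submodule.smul_mem _ _ (key _ p le_rfl)
  have h1 : Module.finrank ℝ W = Fintype.card ι := by
    rw [htop, finrank_top, Module.finrank_fintype_fun_eq_card]
  have h2 := finrank_range_le_card (R := ℝ) b
  rw [Set.finrank] at h2
  change Module.finrank ℝ W ≤ _ at h2
  rw [h1] at h2
  simpa using h2

lemma wr_crit {d D : ℕ} (hd : 1 ≤ d) (f : MvPolynomial (Fin d) ℝ) (hD : f.totalDegree ≤ D)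
    (ε : ℝ) (hε : 0 < ε) (x : Fin d → ℝ)
    (hx : ε * ∑ i, x i ^ (2 * D + 2) < (eval x f) ^ 2) :
    ∃ z ∈ connectedComponentIn {y : Fin d → ℝ | eval y f ≠ 0} x,
      ∀ i, z i ^ (2 * D + 1) =
        eval z (C (1 / (ε * (2 * D + 2))) * (C 2 * (f * pderiv i f))) := by
  classical
  let φ : MvPolynomial (Fin d) ℝ := f ^ 2 - C ε * ∑ i, X i ^ (2 * D + 2)
  have hφ : ∀ y, eval y φ = (eval y f) ^ 2 - ε * ∑ i, y i ^ (2 * D + 2) := by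
    intro y; simp [φ]
  have hsum : ∀ y : Fin d → ℝ, 0 ≤ ∑ i, y i ^ (2 * D + 2) := fun y =>
    Finset.sum_nonneg fun i _ => Even.pow_nonneg ⟨D + 1, by ring⟩ _
  have hpos : ∀ y, 0 < eval y φ → eval y f ≠ 0 := by
    intro y hy h0
    rw [hφ, h0] at hy
    have := mul_nonneg hε.le (hsum y)
    nlinarith
  have hcont : ∀ p : MvPolynomial (Fin d) ℝ, Continuous fun y => eval y p :=
    fun p => MvPolynomial.continuous_eval p
  have hUo : IsOpen {y : Fin d → ℝ | eval y f ≠ 0} :=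
    isOpen_ne_fun (hcont f) continuous_const
  set U := {y : Fin d → ℝ | eval y f ≠ 0} with hU
  have hxφ : 0 < eval x φ := by rw [hφ]; linarith
  have hxU : x ∈ U := hpos x hxφ
  set A := connectedComponentIn U x with hA
  have hAo : IsOpen A := hUo.connectedComponentIn
  have hxA : x ∈ A := mem_connectedComponentIn hxU
  have hclA : ∀ y ∈ closure A, y ∈ U → y ∈ A := by
    intro y hy hyU
    have hpre : IsPreconnected (insert y A) :=
      isPreconnected_connectedComponentIn.subset_closure (Set.subset_insert _ _)
        (Set.insert_subset hy subset_closure)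
    exact hpre.subset_connectedComponentIn (Set.mem_insert_of_mem _ hxA)
      (Set.insert_subset hyU (connectedComponentIn_subset _ _)) (Set.mem_insert _ _)
  obtain ⟨c, hc, hgrow⟩ := wr_growth f hD
  let R : ℝ := 1 + c ^ 2 / ε
  have hcε : 0 ≤ c ^ 2 / ε := by positivity
  have hfar : ∀ y : Fin d → ℝ, R ≤ ‖y‖ → eval y φ ≤ 0 := by
    intro y hy
    have hy1 : 1 ≤ ‖y‖ := by simp only [R] at hy; linarith
    have h1 := hgrow y hy1
    have h2 : (eval y f) ^ 2 ≤ c ^ 2 * ‖y‖ ^ (2 * D) := by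
      rw [← sq_abs]
      calc |eval y f| ^ 2 ≤ (c * ‖y‖ ^ D) ^ 2 := pow_le_pow_left₀ (abs_nonneg _) h1 2
        _ = _ := by ring
    have h3 : c ^ 2 ≤ ε * ‖y‖ ^ 2 := by
      have h4 : c ^ 2 / ε ≤ ‖y‖ ^ 2 := by simp only [R] at hy; nlinarith
      rw [div_le_iff₀ hε] at h4; linarith
    have h5 : ‖y‖ ^ (2 * D + 2) ≤ ∑ i, y i ^ (2 * D + 2) := by
      haveI : Nonempty (Fin d) := ⟨⟨0, hd⟩⟩
      obtain ⟨i, hi⟩ : ∃ i, ‖y‖ ≤ ‖y i‖ := by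
        by_contra hcon
        push Not at hcon
        exact lt_irrefl _ ((pi_norm_lt_iff (by linarith)).2 hcon)
      have hev : Even (2 * D + 2) := ⟨D + 1, by ring⟩
      calc ‖y‖ ^ (2 * D + 2) ≤ ‖y i‖ ^ (2 * D + 2) := pow_le_pow_left₀ (norm_nonneg _) hi _
        _ = y i ^ (2 * D + 2) := by rw [Real.norm_eq_abs, hev.pow_abs]
        _ ≤ _ := Finset.single_le_sum (f := fun i => y i ^ (2 * D + 2))
            (fun k _ => hev.pow_nonneg _) (Finset.mem_univ i)
    rw [hφ]
    have h6 : c ^ 2 * ‖y‖ ^ (2 * D) ≤ ε * ‖y‖ ^ (2 * D + 2) := by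
      calc _ ≤ (ε * ‖y‖ ^ 2) * ‖y‖ ^ (2 * D) :=
            mul_le_mul_of_nonneg_right h3 (by positivity)
        _ = _ := by ring
    have h7 := mul_le_mul_of_nonneg_left h5 hε.le
    linarith
  have hnear : ∀ y : Fin d → ℝ, 0 < eval y φ → ‖y‖ < R := by
    intro y hy
    by_contra hcon
    exact absurd (hfar y (not_lt.1 hcon)) (not_le.2 hy)
  have hK : IsCompact (closure A ∩ Metric.closedBall 0 R) :=
    (isCompact_closedBall _ _).inter_left isClosed_closure
  obtain ⟨z, hzK, hzmax⟩ := hK.exists_isMaxOn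
    ⟨x, subset_closure hxA, mem_closedBall_zero_iff.2 (hnear x hxφ).le⟩ (hcont φ).continuousOn
  have hzφ : 0 < eval z φ := lt_of_lt_of_le hxφ
    (hzmax ⟨subset_closure hxA, mem_closedBall_zero_iff.2 (hnear x hxφ).le⟩)
  have hzA : z ∈ A := hclA z hzK.1 (hpos z hzφ)
  refine ⟨z, hzA, fun i => ?_⟩
  have hloc : IsLocalMax (fun y => eval y φ) z := by
    have hO : A ∩ Metric.ball 0 R ∈ nhds z :=
      (hAo.inter Metric.isOpen_ball).mem_nhds ⟨hzA, mem_ball_zero_iff.2 (hnear z hzφ)⟩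
    filter_upwards [hO] with y hy
    exact hzmax ⟨subset_closure hy.1, Metric.ball_subset_closedBall hy.2⟩
  have hloc1 : IsLocalMax (fun t : ℝ => eval (Function.update z i t) φ) (z i) := by
    have hct : ContinuousAt (fun t : ℝ => Function.update z i t) (z i) :=
      (continuous_const.update i continuous_id).continuousAt
    have ht : Filter.Tendsto (fun t : ℝ => Function.update z i t) (nhds (z i)) (nhds z) := by
      simpa [ContinuousAt] using hct
    have := ht.eventually hloc
    filter_upwards [this] with t h
    simpa using h
  have h0 := hloc1.hasDerivAt_eq_zero (wr_hasDerivAt φ z i)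
  have hpd : pderiv i φ = C 2 * (f * pderiv i f) - C (ε * (2 * D + 2)) * X i ^ (2 * D + 1) := by
    have hC2 : (C 2 : MvPolynomial (Fin d) ℝ) = 2 := map_ofNat C 2
    have hXs : pderiv i (∑ k, (X k : MvPolynomial (Fin d) ℝ) ^ (2 * D + 2))
        = C (2 * (D : ℝ) + 2) * X i ^ (2 * D + 1) := by
      rw [map_sum, Finset.sum_eq_single i]
      · rw [pderiv_pow, pderiv_X_self]; simp [hC2]
      · intro k _ hk; rw [pderiv_pow, pderiv_X_of_ne hk]; simp
      · simp
    simp only [φ, map_sub, pderiv_C_mul, hXs, pderiv_pow]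
    simp only [C_mul', smul_smul]
    simp [← C_mul']
    rw [hC2]
    ring
  rw [hpd] at h0
  simp only [map_sub, map_mul, eval_C, map_pow, eval_X] at h0 ⊢
  have hne : ε * (2 * (D : ℝ) + 2) ≠ 0 := by positivity
  field_simp
  linarith

/-- **Warren's bound.** For every `d ≥ 1` there is a constant `C_d` such that for every nonzero
`d`-variate real polynomial `f` of degree at most `D ≥ 1`, the number of connected components
of `ℝ^d \ Z(f)` is at most `C_d·D^d`. -/
theorem warren_connected_components_bound (d : ℕ) (hd : 1 ≤ d) :
    ∃ C : ℝ, 0 < C ∧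
      ∀ (f : MvPolynomial (Fin d) ℝ) (D : ℕ), 1 ≤ D → f ≠ 0 → f.totalDegree ≤ D →
        (Set.ncard {A : Set (Fin d → ℝ) | ∃ x : Fin d → ℝ, eval x f ≠ 0 ∧
            A = connectedComponentIn {y : Fin d → ℝ | eval y f ≠ 0} x} : ℝ)
          ≤ C * (D : ℝ) ^ d := by
  refine ⟨3 ^ d, by positivity, ?_⟩
  intro f D hD1 _ hD
  set S := {A : Set (Fin d → ℝ) | ∃ x : Fin d → ℝ, eval x f ≠ 0 ∧
            A = connectedComponentIn {y : Fin d → ℝ | eval y f ≠ 0} x} with hS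
  by_cases hfin : S.Finite
  swap
  · rw [Set.Infinite.ncard hfin]; push_cast; positivity
  haveI : Fintype S := hfin.fintype
  have hx : ∀ A : S, ∃ x : Fin d → ℝ, eval x f ≠ 0 ∧
            (A : Set (Fin d → ℝ)) = connectedComponentIn {y : Fin d → ℝ | eval y f ≠ 0} x :=
    fun A => A.2
  choose x hxf hxA using hx
  obtain ⟨ε, hε, hεx⟩ : ∃ ε : ℝ, 0 < ε ∧
      ∀ A : S, ε * ∑ i, x A i ^ (2 * D + 2) < (eval (x A) f) ^ 2 := by
    have hev : ∀ A : S, ∀ᶠ ε : ℝ in nhdsWithin 0 (Set.Ioi 0),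
        ε * ∑ i, x A i ^ (2 * D + 2) < (eval (x A) f) ^ 2 := by
      intro A
      have hc : Filter.Tendsto (fun ε : ℝ => ε * ∑ i, x A i ^ (2 * D + 2)) (nhds 0)
          (nhds (0 * ∑ i, x A i ^ (2 * D + 2))) :=
        (continuous_id.mul continuous_const).tendsto 0
      rw [zero_mul] at hc
      have hp : 0 < (eval (x A) f) ^ 2 := by have := hxf A; positivity
      exact (hc.mono_left nhdsWithin_le_nhds).eventually_lt_const hp
    have := (Filter.eventually_all.2 hev).and self_mem_nhdsWithin
    obtain ⟨ε, h1, h2⟩ := this.exists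
    exact ⟨ε, h2, h1⟩
  choose z hzA hz using fun A : S => wr_crit hd f hD ε hε (x A) (hεx A)
  have hinj : Function.Injective z := by
    intro A B hAB
    apply Subtype.ext
    rw [hxA A, hxA B, connectedComponentIn_eq (hzA A), connectedComponentIn_eq (hzA B), hAB]
  have hcard := wr_count (n := 2 * D) z hinj _ (fun i => by
    refine (totalDegree_mul _ _).trans ?_
    have h1 := totalDegree_mul (C (2 : ℝ)) (f * pderiv i f)
    have h2 := totalDegree_mul f (pderiv i f)
    have h3 := wr_totalDegree_pderiv f hD i
    rw [totalDegree_C] at h1 ⊢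
    omega) hz
  have hN : S.ncard = Fintype.card S := by
    rw [Set.ncard_eq_toFinset_card', Set.toFinset_card]
  rw [hN, ← mul_pow]
  calc (Fintype.card S : ℝ) ≤ ((2 * D + 1) ^ d : ℕ) := by exact_mod_cast hcard
    _ = (2 * (D : ℝ) + 1) ^ d := by push_cast; ring
    _ ≤ _ := by
      have : (1 : ℝ) ≤ D := by exact_mod_cast hD1
      exact pow_le_pow_left₀ (by positivity) (by linarith) _
end
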